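/- arXiv:math/0703695 — 2 statements merged into one kernel-verified Lean document; each statement's English description precedes it below -/
import Mathlib

section
/- Let G be a threshold graph on {1,…,m} with weight vector w satisfying w_1 ≥ w_2 ≥ ⋯ ≥ w_m, and assume G has no isolated vertices. Then the height of the edge ideal I_G in S equals n. -/
open MvPolynomial

/-- The height of an ideal: the infimum of the heights of the prime ideals
containing it. -/
noncomputable def idealHeight {A : Type*} [CommRing A] (I : Ideal A) : ℕ∞ :=
  sInf (Order.height '' {p : PrimeSpectrum A | I ≤ p.asIdeal})

/-!
For a graph on finitely many vertices over a nontrivial Noetherian ring, the height of the edge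
ideal is the vertex cover number. A vertex cover `c` gives `I_G ≤ (X i : i ∈ c)`, of height at most
`|c|` by Krull's height theorem; conversely the variables lying in a prime containing `I_G` form a
vertex cover, and a prime containing `r` variables has height at least `r`.

In a threshold graph with decreasing weights, the vertices `1, …, n` form a vertex cover, by
maximality of `n`. If `j > n` is a neighbour of `n`, then `w_a + w_b ≥ w_n + w_j > 0` for distinct
`a, b` among `1, …, n, j`, so these `n + 1` vertices form a clique, and a vertex cover misses at
most one vertex of a clique.
-/

section PrimesContainingVariables

variable {σ R : Type*} [CommRing R]

/-- Sending `X a` to an indeterminate `T` and reducing everything else modulo `p` gives a map into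
the domain `(R[σ] ⧸ p)[T]`. Its kernel does not contain `X a`, and is contained in `p` because
setting `T = 0` recovers the quotient map. -/
lemma exists_isPrime_lt_of_X_mem {p : Ideal (MvPolynomial σ R)} [p.IsPrime] {a : σ}
    (ha : X a ∈ p) :
    ∃ q : Ideal (MvPolynomial σ R), q.IsPrime ∧ q < p ∧ ∀ i ≠ a, X i ∈ p → X i ∈ q := by
  classical
  let mkp := Ideal.Quotient.mk p
  let φ : MvPolynomial σ R →+* Polynomial (MvPolynomial σ R ⧸ p) :=
    eval₂Hom (Polynomial.C.comp (mkp.comp C))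
      (Function.update (fun i => Polynomial.C (mkp (X i))) a Polynomial.X)
  have hφ_same : φ (X a) = Polynomial.X := by simp [φ]
  have hφ_ne (i : σ) (hi : i ≠ a) : φ (X i) = Polynomial.C (mkp (X i)) := by simp [φ, hi]
  have hφ_eval : (Polynomial.evalRingHom 0).comp φ = mkp := by
    refine MvPolynomial.ringHom_ext (fun r => by simp [φ]) fun i => ?_
    rcases eq_or_ne i a with rfl | hi
    · simpa [hφ_same] using (Ideal.Quotient.eq_zero_iff_mem.2 ha).symm
    · simp [hφ_ne i hi]
  have hle : RingHom.ker φ ≤ p := by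
    intro f hf
    rw [← Ideal.Quotient.eq_zero_iff_mem]
    change mkp f = 0
    rw [← hφ_eval, RingHom.comp_apply, (RingHom.mem_ker).1 hf, map_zero]
  have ha_notMem : X a ∉ RingHom.ker φ := by
    rw [RingHom.mem_ker, hφ_same]
    exact Polynomial.X_ne_zero
  refine ⟨RingHom.ker φ, RingHom.ker_isPrime φ,
    lt_of_le_not_ge hle fun h => ha_notMem (h ha), fun i hi hip => ?_⟩
  rw [RingHom.mem_ker, hφ_ne i hi, Ideal.Quotient.eq_zero_iff_mem.2 hip, Polynomial.C_0]

lemma card_le_height_of_forall_X_mem (s : Finset σ) {p : Ideal (MvPolynomial σ R)} [p.IsPrime]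
    (hs : ∀ i ∈ s, X i ∈ p) : (s.card : ℕ∞) ≤ p.height := by
  classical
  induction s using Finset.induction_on generalizing p with
  | empty => simp
  | insert a s ha ih =>
    obtain ⟨q, hq, hqp, hXq⟩ := exists_isPrime_lt_of_X_mem (hs a (Finset.mem_insert_self a s))
    have hsq : ∀ i ∈ s, X i ∈ q := fun i hi =>
      hXq i (ne_of_mem_of_not_mem hi ha) (hs i (Finset.mem_insert_of_mem hi))
    calc ((insert a s).card : ℕ∞) = s.card + 1 := by
          rw [Finset.card_insert_of_notMem ha, Nat.cast_succ]
      _ ≤ q.height + 1 := by gcongr; exact ih hsq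
      _ ≤ p.height := Ideal.height_add_one_le_of_lt_of_isPrime hqp

lemma encard_setOf_X_mem_le_height (p : Ideal (MvPolynomial σ R)) [p.IsPrime] :
    {i | X i ∈ p}.encard ≤ p.height := by
  refine ENat.forall_natCast_le_iff_le.1 fun k hk => ?_
  obtain ⟨t, htp, htk⟩ := Set.exists_subset_encard_eq hk
  have ht : t.Finite := Set.finite_of_encard_eq_coe htk
  rw [← htk, ht.encard_eq_coe_toFinset_card]
  exact card_le_height_of_forall_X_mem _ fun i hi => htp (ht.mem_toFinset.1 hi)

lemma span_X_image_ne_top [Nontrivial R] (s : Set σ) :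
    Ideal.span (X '' s : Set (MvPolynomial σ R)) ≠ ⊤ := by
  have hle : Ideal.span (X '' s) ≤ RingHom.ker (constantCoeff (σ := σ) (R := R)) := by
    rw [Ideal.span_le]
    rintro _ ⟨i, -, rfl⟩
    exact constantCoeff_X R i
  exact ne_top_of_le_ne_top (RingHom.ker_ne_top _) hle

lemma height_span_X_image_le [Finite σ] [IsNoetherianRing R] [Nontrivial R] (s : Set σ) :
    (Ideal.span (X '' s : Set (MvPolynomial σ R))).height ≤ s.encard :=
  calc (Ideal.span (X '' s : Set (MvPolynomial σ R))).height
      ≤ (Ideal.span (X '' s : Set (MvPolynomial σ R))).spanFinrank :=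
        Ideal.height_le_spanFinrank _ (span_X_image_ne_top s)
    _ ≤ (X '' s : Set (MvPolynomial σ R)).encard := Submodule.spanFinrank_span_le_encard _
    _ ≤ s.encard := Set.encard_image_le _ _

end PrimesContainingVariables

lemma idealHeight_eq_height {A : Type*} [CommRing A] (I : Ideal A) :
    idealHeight I = I.height := by
  apply le_antisymm
  · rw [I.height_eq_inf_minimalPrimes]
    refine le_iInf₂ fun J hJ => sInf_le ⟨⟨J, hJ.isPrime⟩, hJ.le, ?_⟩
    exact (PrimeSpectrum.height_eq_orderHeight _).symm
  · refine le_sInf ?_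
    rintro _ ⟨p, hp, rfl⟩
    rw [← p.height_eq_orderHeight]
    exact Ideal.height_mono hp

section EdgeIdeal

variable {V : Type*} (R : Type*) [CommRing R] (G : SimpleGraph V)

/-- The edge ideal of the graph `G` over `R`, generated by the products `X i * X j` over the edges
`{i, j}` of `G`. -/
noncomputable def edgeIdeal : Ideal (MvPolynomial V R) :=
  Ideal.span {p | ∃ i j, G.Adj i j ∧ p = X i * X j}

variable {R G}

lemma isVertexCover_setOf_X_mem {p : Ideal (MvPolynomial V R)} [hp : p.IsPrime]
    (h : edgeIdeal R G ≤ p) : G.IsVertexCover {i | X i ∈ p} :=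
  fun i j hij => hp.mem_or_mem (h (Ideal.subset_span ⟨i, j, hij, rfl⟩))

lemma edgeIdeal_le_span_X_image {c : Set V} (hc : G.IsVertexCover c) :
    edgeIdeal R G ≤ Ideal.span (X '' c) := by
  rw [edgeIdeal, Ideal.span_le]
  rintro _ ⟨i, j, hij, rfl⟩
  rcases hc hij with hi | hj
  · exact Ideal.mul_mem_right _ _ (Ideal.subset_span ⟨i, hi, rfl⟩)
  · exact Ideal.mul_mem_left _ _ (Ideal.subset_span ⟨j, hj, rfl⟩)

variable (R G)

lemma vertexCoverNum_le_height_edgeIdeal : G.vertexCoverNum ≤ (edgeIdeal R G).height := by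
  rw [Ideal.height_eq_inf_minimalPrimes]
  refine le_iInf₂ fun p hp => ?_
  have := hp.isPrime
  calc G.vertexCoverNum ≤ {i | X i ∈ p}.encard :=
        (isVertexCover_setOf_X_mem hp.le).vertexCoverNum_le
    _ ≤ p.height := encard_setOf_X_mem_le_height p

theorem height_edgeIdeal [Finite V] [IsNoetherianRing R] [Nontrivial R] :
    (edgeIdeal R G).height = G.vertexCoverNum := by
  refine le_antisymm ?_ (vertexCoverNum_le_height_edgeIdeal R G)
  obtain ⟨c, hcard, hc⟩ := G.vertexCoverNum_exists
  calc (edgeIdeal R G).height ≤ (Ideal.span (X '' c : Set (MvPolynomial V R))).height :=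
        Ideal.height_mono (edgeIdeal_le_span_X_image hc)
    _ ≤ c.encard := height_span_X_image_le c
    _ = G.vertexCoverNum := hcard

end EdgeIdeal

section ThresholdGraph

variable {V : Type*} {G : SimpleGraph V}

lemma encard_sub_one_le_vertexCoverNum {s : Set V} (hs : G.IsClique s) :
    s.encard - 1 ≤ G.vertexCoverNum :=
  calc s.encard - 1 = (⊤ : SimpleGraph s).vertexCoverNum := SimpleGraph.vertexCoverNum_top.symm
    _ = (G.induce s).vertexCoverNum := by rw [SimpleGraph.induce_eq_top.2 hs]
    _ ≤ G.vertexCoverNum :=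
      (SimpleGraph.Embedding.induce s).isContained.vertexCoverNum_le_vertexCoverNum

lemma isVertexCover_Iic [LinearOrder V] {k : V} (hk : ∀ i j, k < i → i < j → ¬ G.Adj i j) :
    G.IsVertexCover (Set.Iic k) := by
  intro i j hij
  by_contra! h
  simp only [Set.mem_Iic, not_le] at h
  rcases hij.ne.lt_or_gt with hlt | hgt
  · exact hk i j h.1 hlt hij
  · exact hk j i h.2 hgt hij.symm

variable {A : Type*} [AddCommMonoid A] [Preorder A] [IsOrderedAddMonoid A] {w : V → A}

lemma isClique_insert_Iic [Preorder V] (hthr : ∀ i j, i ≠ j → (G.Adj i j ↔ 0 < w i + w j))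
    (hw : Antitone w) {k l : V} (hkl : k ≤ l) (hadj : G.Adj k l) :
    G.IsClique (insert l (Set.Iic k)) := by
  have hpos : 0 < w k + w l := (hthr k l hadj.ne).1 hadj
  have hle (i : V) (hi : i ∈ insert l (Set.Iic k)) : i ≤ l :=
    hi.elim le_of_eq fun hik => hik.trans hkl
  have hadj_of_le (i j : V) (hij : i ≠ j) (hik : i ≤ k) (hjl : j ≤ l) : G.Adj i j :=
    (hthr i j hij).2 (hpos.trans_le (add_le_add (hw hik) (hw hjl)))
  rintro i (rfl | hik) j hj hij
  · exact (hadj_of_le j i hij.symm (hj.resolve_left hij.symm) le_rfl).symm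
  · exact hadj_of_le i j hij hik (hle j hj)

lemma vertexCoverNum_eq_encard_Iic [LinearOrder V]
    (hthr : ∀ i j, i ≠ j → (G.Adj i j ↔ 0 < w i + w j)) (hw : Antitone w) {k : V}
    (hk_mem : ∃ j, k < j ∧ G.Adj k j) (hk_max : ∀ i j, k < i → i < j → ¬ G.Adj i j) :
    G.vertexCoverNum = (Set.Iic k).encard := by
  refine le_antisymm (isVertexCover_Iic hk_max).vertexCoverNum_le ?_
  obtain ⟨l, hkl, hadj⟩ := hk_mem
  calc (Set.Iic k).encard = (insert l (Set.Iic k)).encard - 1 := by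
        rw [Set.encard_insert_of_notMem (Set.notMem_Iic.2 hkl)]
        exact (ENat.addLECancellable_of_ne_top ENat.one_ne_top).add_tsub_cancel_right.symm
    _ ≤ G.vertexCoverNum :=
      encard_sub_one_le_vertexCoverNum (isClique_insert_Iic hthr hw hkl.le hadj)

end ThresholdGraph

theorem threshold_edge_ideal_height_general {R V A : Type*}
    [CommRing R] [IsNoetherianRing R] [Nontrivial R] [LinearOrder V] [Finite V]
    [AddCommMonoid A] [Preorder A] [IsOrderedAddMonoid A] {G : SimpleGraph V} {w : V → A}
    (hthr : ∀ i j, i ≠ j → (G.Adj i j ↔ 0 < w i + w j)) (hw : Antitone w) {k : V}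
    (hk_mem : ∃ j, k < j ∧ G.Adj k j) (hk_max : ∀ i j, k < i → i < j → ¬ G.Adj i j) :
    idealHeight (edgeIdeal R G) = (Set.Iic k).encard := by
  rw [idealHeight_eq_height, height_edgeIdeal, vertexCoverNum_eq_encard_Iic hthr hw hk_mem hk_max]

/-- Let `G` be a threshold graph on `{1,…,m}` with weight
vector `w` satisfying `w_1 ≥ ⋯ ≥ w_m`, without isolated vertices; let
`n := max{i : i ~ j for some j > i}` and `λ_i := max{j : i ~ j}`. Then the
height of the edge ideal `I_G ⊆ S = K[x_1,…,x_m]` equals `n`.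
Vertices are `Fin m` (vertex `v` has 1-based label `v.val + 1`); `i : Fin n`
has 1-based label `i.val + 1`. -/
theorem threshold_edge_ideal_height
    (K : Type*) [Field K]
    (m : ℕ) (hm : 2 ≤ m) (G : SimpleGraph (Fin m)) (w : Fin m → ℝ)
    (hthr : ∀ i j : Fin m, i ≠ j → (G.Adj i j ↔ 0 < w i + w j))
    (hw : Antitone w)
    (hiso : ∀ i, ∃ j, G.Adj i j)
    (n : ℕ) (hn : 1 ≤ n) (hnm : n ≤ m)
    (hn_mem : ∃ j : Fin m, n - 1 < j.val ∧ G.Adj ⟨n - 1, by omega⟩ j)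
    (hn_max : ∀ i j : Fin m, n ≤ i.val → i.val < j.val → ¬ G.Adj i j)
    (lam : Fin n → ℕ)
    (hlam_mem : ∀ i : Fin n, ∃ j : Fin m, j.val + 1 = lam i ∧ G.Adj (Fin.castLE hnm i) j)
    (hlam_max : ∀ (i : Fin n) (j : Fin m), G.Adj (Fin.castLE hnm i) j → j.val < lam i) :
    idealHeight
      (Ideal.span {p : MvPolynomial (Fin m) K |
        ∃ i j : Fin m, G.Adj i j ∧ p = X i * X j}) = (n : ℕ∞) := by
  have h := threshold_edge_ideal_height_general (R := K) hthr hw (k := ⟨n - 1, by omega⟩) hn_mem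
    fun i j hi => hn_max i j (Nat.le_of_pred_lt hi)
  rw [← Finset.coe_Iic, Set.encard_coe_eq_coe_finsetCard, Fin.card_Iic, Nat.sub_add_cancel hn] at h
  exact h
end

section
/- Let I ⊆ S be a strongly stable monomial ideal all of whose minimal generators have degree two, with x_1·x_m ∈ I. Then S/I is Cohen–Macaulay if and only if I = (x_1,…,x_m)², where Cohen–Macaulayness is expressed as: there exists a list of elements of the maximal ideal 𝔪 = (x_1,…,x_m) of S that is a regular sequence on the S-module S/I and whose length equals the Krull dimension of the ring S/I. -/
open MvPolynomial

/-!
Let `t` be the last variable, let `I` be generated in degree `d + 1`, and let `v` be a monomial of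
degree `d` with `v * t ∈ I` (for `d = 1`, the first variable). Then `v ∉ I`, while strong stability
puts `v * x` in `I` for every variable `x`. So `v` is a socle element of `S ⧸ I`: the depth is zero,
and Cohen–Macaulayness means that `S ⧸ I` has dimension zero. In that case `t ^ (d + 1) ∈ I`, since
otherwise `S ⧸ I` maps onto the polynomial ring in `t` alone; strong stability, starting from
`t ^ (d + 1)`, then reaches all monomials of degree `d + 1`. Conversely, the quotient by a power of
`𝔪` has the same spectrum as `S ⧸ 𝔪 = K`.
-/

section RegularSequence

open RingTheory.Sequence

theorem eq_nil_of_isWeaklyRegular_of_smul_eq_zero {A M : Type*} [CommRing A] [AddCommGroup M]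
    [Module A M] {rs : List A} {x : M} (hx : x ≠ 0) (hrs : ∀ r ∈ rs, r • x = 0)
    (hreg : IsWeaklyRegular M rs) : rs = [] := by
  cases rs with
  | nil => rfl
  | cons r rs =>
    have hr : IsSMulRegular M r := ((isWeaklyRegular_cons_iff M r rs).mp hreg).1
    exact absurd (hr.right_eq_zero_of_smul (hrs r List.mem_cons_self)) hx

theorem exists_isRegular_length_eq_ringKrullDim_iff {A : Type*} [CommRing A] {I J : Ideal A}
    {x : A} (hx : x ∉ I) (hJx : ∀ r ∈ J, r * x ∈ I) :
    (∃ rs : List A, (∀ r ∈ rs, r ∈ J) ∧ IsRegular (A ⧸ I) rs ∧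
      (rs.length : WithBot ℕ∞) = ringKrullDim (A ⧸ I)) ↔ ringKrullDim (A ⧸ I) = 0 := by
  have hx' : Ideal.Quotient.mk I x ≠ 0 := mt Ideal.Quotient.eq_zero_iff_mem.mp hx
  constructor
  · rintro ⟨rs, hrs, hreg, hdim⟩
    have hnil : rs = [] := eq_nil_of_isWeaklyRegular_of_smul_eq_zero hx'
      (fun r hr ↦ Ideal.Quotient.eq_zero_iff_mem.mpr (hJx r (hrs r hr))) hreg.toIsWeaklyRegular
    simpa [hnil] using hdim.symm
  · intro hdim
    have : Nontrivial (A ⧸ I) := nontrivial_of_ne _ _ hx'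
    exact ⟨[], by simp, IsRegular.nil A (A ⧸ I), by simp [hdim]⟩

end RegularSequence

theorem nontrivial_of_ringKrullDim_eq_zero {R : Type*} [CommRing R] (hR : ringKrullDim R = 0) :
    Nontrivial R :=
  not_subsingleton_iff_nontrivial.mp fun _ ↦ by simp [ringKrullDim_eq_bot_of_subsingleton] at hR

theorem ringKrullDim_quotient_pow {A : Type*} [CommRing A] (I : Ideal A) {n : ℕ} (hn : n ≠ 0) :
    ringKrullDim (A ⧸ I ^ n) = ringKrullDim (A ⧸ I) := by
  rw [ringKrullDim_quotient, ringKrullDim_quotient, PrimeSpectrum.zeroLocus_pow I hn]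

theorem idealOfVars_eq_ker_constantCoeff (σ R : Type*) [CommRing R] :
    idealOfVars σ R = RingHom.ker (constantCoeff : MvPolynomial σ R →+* R) := by
  ext p
  rw [← pow_one (idealOfVars σ R), mem_pow_idealOfVars_iff']
  simp [Finsupp.degree_eq_zero_iff, constantCoeff_eq]

theorem ringKrullDim_quotient_idealOfVars (σ R : Type*) [CommRing R] :
    ringKrullDim (MvPolynomial σ R ⧸ idealOfVars σ R) = ringKrullDim R := by
  rw [idealOfVars_eq_ker_constantCoeff]
  exact ringKrullDim_eq_of_ringEquiv
    (RingHom.quotientKerEquivOfSurjective fun a ↦ ⟨C a, constantCoeff_C σ a⟩)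

theorem ringKrullDim_add_one_le_of_le_ker_aeval_single {σ R : Type*} [CommRing R] [DecidableEq σ]
    {I : Ideal (MvPolynomial σ R)} {t : σ}
    (hI : I ≤ RingHom.ker (aeval (R := R) (Pi.single t (Polynomial.X : Polynomial R)))) :
    ringKrullDim R + 1 ≤ ringKrullDim (MvPolynomial σ R ⧸ I) := by
  let f : MvPolynomial σ R →ₐ[R] Polynomial R := aeval (Pi.single t Polynomial.X)
  have hf : Function.Surjective f := fun p ↦
    ⟨Polynomial.aeval (X t) p, by simp [f, ← Polynomial.aeval_algHom_apply]⟩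
  calc ringKrullDim R + 1
      ≤ ringKrullDim (Polynomial R) := ringKrullDim_succ_le_ringKrullDim_polynomial
    _ ≤ ringKrullDim (MvPolynomial σ R ⧸ I) :=
      ringKrullDim_le_of_surjective (Ideal.Quotient.lift I f.toRingHom hI)
        (Ideal.Quotient.lift_surjective_of_surjective I hI hf)

/-- The ideal `I` is generated by monomials of degree `d`. Generators are taken to be all monomials
of degree `d` lying in `I`. -/
def IsGeneratedInDegree {σ R : Type*} [CommSemiring R] (I : Ideal (MvPolynomial σ R)) (d : ℕ) :
    Prop :=
  I = Ideal.span ((monomial · 1) '' {u : σ →₀ ℕ | u.degree = d ∧ monomial u 1 ∈ I})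

namespace IsGeneratedInDegree

variable {σ R : Type*}

theorem le_iff [CommSemiring R] {I J : Ideal (MvPolynomial σ R)} {d : ℕ}
    (hI : IsGeneratedInDegree I d) :
    I ≤ J ↔ ∀ u : σ →₀ ℕ, u.degree = d → monomial u 1 ∈ I → monomial u 1 ∈ J := by
  refine ⟨fun h u _ hu ↦ h hu, fun h ↦ hI.le.trans (Ideal.span_le.mpr ?_)⟩
  rintro _ ⟨u, ⟨hdeg, hu⟩, rfl⟩
  exact h u hdeg hu

theorem le_pow_idealOfVars [CommSemiring R] {I : Ideal (MvPolynomial σ R)} {d : ℕ}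
    (hI : IsGeneratedInDegree I d) : I ≤ idealOfVars σ R ^ d := by
  rw [hI.le_iff, pow_idealOfVars_eq_span]
  exact fun u hdeg _ ↦ Ideal.subset_span ⟨u, hdeg, rfl⟩

theorem monomial_notMem [CommSemiring R] [Nontrivial R] {I : Ideal (MvPolynomial σ R)} {d : ℕ}
    (hI : IsGeneratedInDegree I d) {u : σ →₀ ℕ} (hu : u.degree < d) : monomial u 1 ∉ I := fun h ↦
  hu.not_ge ((monomial_mem_pow_idealOfVars_iff d u one_ne_zero).mp (hI.le_pow_idealOfVars h))

theorem X_pow_mem_of_ringKrullDim_quotient_eq_zero [CommRing R] [Nontrivial R]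
    {I : Ideal (MvPolynomial σ R)} {d : ℕ} (hI : IsGeneratedInDegree I d)
    (hdim : ringKrullDim (MvPolynomial σ R ⧸ I) = 0) (t : σ) : X t ^ d ∈ I := by
  classical
  by_contra ht
  suffices hker : I ≤ RingHom.ker (aeval (R := R) (Pi.single t (Polynomial.X : Polynomial R))) by
    have hle : ringKrullDim R + 1 ≤ 0 :=
      hdim ▸ ringKrullDim_add_one_le_of_le_ker_aeval_single hker
    have hR : 0 ≤ ringKrullDim R := ringKrullDim_nonneg_of_nontrivial
    exact absurd ((add_le_add_left hR 1).trans hle) (by norm_num)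
  rw [hI.le_iff]
  intro u hdeg hu
  obtain ⟨i, hi, hit⟩ : ∃ i, u i ≠ 0 ∧ i ≠ t := by
    by_contra! hsupp
    have hut : u = Finsupp.single t (u t) := by
      ext i
      by_cases hit : i = t
      · simp [hit]
      · simp [hit, not_imp_comm.mp (hsupp i) hit]
    rw [hut, Finsupp.degree_single] at hdeg
    rw [X_pow_eq_monomial, ← hdeg, ← hut] at ht
    exact ht hu
  rw [RingHom.mem_ker, aeval_monomial, map_one, one_mul]
  exact Finset.prod_eq_zero (Finsupp.mem_support_iff.mpr hi) (by simp [hit, hi])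

end IsGeneratedInDegree

theorem isGeneratedInDegree_two_of_eq_span {σ R : Type*} [CommSemiring R]
    {I : Ideal (MvPolynomial σ R)}
    (hI : I = Ideal.span {p | (∃ i j : σ, p = X i * X j) ∧ p ∈ I}) : IsGeneratedInDegree I 2 := by
  apply le_antisymm
  · refine hI.le.trans (Ideal.span_mono ?_)
    rintro _ ⟨⟨i, j, rfl⟩, hij⟩
    have hmon : (X i * X j : MvPolynomial σ R) =
        monomial (Finsupp.single i 1 + Finsupp.single j 1) 1 := by
      simp [X, monomial_mul]
    exact ⟨_, ⟨by simp, hmon ▸ hij⟩, hmon.symm⟩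
  · rw [Ideal.span_le]
    rintro _ ⟨u, ⟨-, hu⟩, rfl⟩
    exact hu

/-- Strong stability of an ideal, tested on the monomials it contains: a variable dividing a
monomial of `I` may be replaced by any smaller variable. The subtraction of exponents is never
truncated, because `j` is in the support of `u`. -/
def IsStronglyStable {σ R : Type*} [CommSemiring R] [LT σ] (I : Ideal (MvPolynomial σ R)) : Prop :=
  ∀ u : σ →₀ ℕ, monomial u 1 ∈ I → ∀ i j : σ, i < j → j ∈ u.support →
    monomial (u + Finsupp.single i 1 - Finsupp.single j 1) 1 ∈ I

namespace IsStronglyStable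

variable {σ R : Type*} [CommSemiring R] [PartialOrder σ] {I : Ideal (MvPolynomial σ R)} {i j t : σ}

theorem monomial_add_single_one_mem (hI : IsStronglyStable I) (hij : i ≤ j) {v : σ →₀ ℕ}
    (h : monomial (v + Finsupp.single j 1) 1 ∈ I) : monomial (v + Finsupp.single i 1) 1 ∈ I := by
  rcases hij.eq_or_lt with rfl | hlt
  · exact h
  · have hmove := hI _ h i j hlt (by simp)
    rwa [add_right_comm, add_tsub_cancel_right] at hmove

theorem monomial_add_single_mem (hI : IsStronglyStable I) (hij : i ≤ j) {n : ℕ} {v : σ →₀ ℕ}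
    (h : monomial (v + Finsupp.single j n) 1 ∈ I) : monomial (v + Finsupp.single i n) 1 ∈ I := by
  induction n generalizing v with
  | zero => simpa using h
  | succ n ih =>
    rw [Finsupp.single_add, ← add_assoc] at h ⊢
    have hone := hI.monomial_add_single_one_mem hij h
    rw [add_right_comm] at hone ⊢
    exact ih hone

theorem monomial_add_mem (hI : IsStronglyStable I) (ht : IsTop t) (w : σ →₀ ℕ) {v : σ →₀ ℕ}
    (h : monomial (v + Finsupp.single t w.degree) 1 ∈ I) : monomial (v + w) 1 ∈ I := by
  induction w using Finsupp.induction_linear generalizing v with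
  | zero => simpa using h
  | single i n => exact hI.monomial_add_single_mem (ht i) (by simpa using h)
  | add w₁ w₂ ih₁ ih₂ =>
    rw [map_add, Finsupp.single_add, ← add_assoc] at h
    have hw₂ := ih₂ h
    rw [add_right_comm] at hw₂
    rw [add_comm w₁, ← add_assoc]
    exact ih₁ hw₂

theorem pow_idealOfVars_le (hI : IsStronglyStable I) (ht : IsTop t) {d : ℕ} (h : X t ^ d ∈ I) :
    idealOfVars σ R ^ d ≤ I := by
  rw [pow_idealOfVars_eq_span, Ideal.span_le]
  rintro _ ⟨u, rfl, rfl⟩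
  simpa using hI.monomial_add_mem ht u (v := 0) (by simpa [X_pow_eq_monomial] using h)

theorem mul_monomial_mem (hI : IsStronglyStable I) (ht : IsTop t) {v : σ →₀ ℕ}
    (h : monomial v 1 * X t ∈ I) {r : MvPolynomial σ R} (hr : r ∈ idealOfVars σ R) :
    r * monomial v 1 ∈ I := by
  suffices hle : idealOfVars σ R ≤ I.colon {monomial v 1} from
    Submodule.mem_colon_singleton.mp (hle hr)
  rw [Ideal.span_le]
  rintro _ ⟨j, rfl⟩
  rw [SetLike.mem_coe, Submodule.mem_colon_singleton, smul_eq_mul, mul_comm]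
  simp only [X, monomial_mul, one_mul] at h ⊢
  exact hI.monomial_add_single_one_mem (ht j) h

end IsStronglyStable

theorem IsStronglyStable.ringKrullDim_quotient_eq_zero_iff {σ R : Type*} [CommRing R]
    [PartialOrder σ] {I : Ideal (MvPolynomial σ R)} {d : ℕ} {t : σ} (hR : ringKrullDim R = 0)
    (hI : IsStronglyStable I) (hgen : IsGeneratedInDegree I d) (hd : d ≠ 0) (ht : IsTop t) :
    ringKrullDim (MvPolynomial σ R ⧸ I) = 0 ↔ I = idealOfVars σ R ^ d := by
  have : Nontrivial R := nontrivial_of_ringKrullDim_eq_zero hR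
  constructor
  · intro hdim
    exact hgen.le_pow_idealOfVars.antisymm <|
      hI.pow_idealOfVars_le ht (hgen.X_pow_mem_of_ringKrullDim_quotient_eq_zero hdim t)
  · rintro rfl
    rw [ringKrullDim_quotient_pow _ hd, ringKrullDim_quotient_idealOfVars, hR]

theorem strongly_stable_cohenMacaulay_iff_general {σ R : Type*} [CommRing R] [PartialOrder σ]
    {I : Ideal (MvPolynomial σ R)} {d : ℕ} {t : σ} (hR : ringKrullDim R = 0)
    (hI : IsStronglyStable I) (hgen : IsGeneratedInDegree I (d + 1)) (ht : IsTop t)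
    {v : σ →₀ ℕ} (hv : v.degree = d) (hvt : monomial v 1 * X t ∈ I) :
    (∃ rs : List (MvPolynomial σ R), (∀ r ∈ rs, r ∈ idealOfVars σ R) ∧
      RingTheory.Sequence.IsRegular (MvPolynomial σ R ⧸ I) rs ∧
      (rs.length : WithBot ℕ∞) = ringKrullDim (MvPolynomial σ R ⧸ I)) ↔
      I = idealOfVars σ R ^ (d + 1) := by
  have : Nontrivial R := nontrivial_of_ringKrullDim_eq_zero hR
  have hvI : monomial v 1 ∉ I := hgen.monomial_notMem (hv.trans_lt d.lt_succ_self)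
  rw [exists_isRegular_length_eq_ringKrullDim_iff hvI fun _ ↦ hI.mul_monomial_mem ht hvt]
  exact hI.ringKrullDim_quotient_eq_zero_iff hR hgen d.succ_ne_zero ht

/-- Let `I ⊆ S = K[x_1,…,x_m]` be a strongly stable monomial
ideal whose minimal generators all have degree two (expressed by: `I` is
generated by the monomials `x_i x_j` lying in `I`), with `x_1 x_m ∈ I`. Then
`S/I` is Cohen–Macaulay — i.e. there is a list of elements of
`𝔪 = (x_1,…,x_m)` that is a regular sequence on `S/I` of length equal to the
Krull dimension of `S/I` — if and only if `I = (x_1,…,x_m)²`.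
Variables are indexed by `Fin m` (`x_v` has 1-based label `v.val + 1`).
Strong stability is expressed on exponent vectors `u : Fin m →₀ ℕ`. -/
theorem strongly_stable_cohenMacaulay_iff
    (K : Type*) [Field K] (m : ℕ) (hm : 2 ≤ m)
    (I : Ideal (MvPolynomial (Fin m) K))
    (hss : ∀ u : Fin m →₀ ℕ, (monomial u (1 : K)) ∈ I →
      ∀ i j : Fin m, i < j → j ∈ u.support →
        (monomial (u + Finsupp.single i 1 - Finsupp.single j 1) (1 : K)) ∈ I)
    (hgen : I = Ideal.span {p : MvPolynomial (Fin m) K |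
        (∃ i j : Fin m, p = X i * X j) ∧ p ∈ I})
    (hx1m : (X (⟨0, by omega⟩ : Fin m) * X (⟨m - 1, by omega⟩ : Fin m) :
      MvPolynomial (Fin m) K) ∈ I) :
    (∃ rs : List (MvPolynomial (Fin m) K),
        (∀ r ∈ rs, r ∈ Ideal.span (Set.range (X : Fin m → MvPolynomial (Fin m) K))) ∧
        RingTheory.Sequence.IsRegular (MvPolynomial (Fin m) K ⧸ I) rs ∧
        (rs.length : WithBot ℕ∞) = ringKrullDim (MvPolynomial (Fin m) K ⧸ I)) ↔
      I = (Ideal.span (Set.range (X : Fin m → MvPolynomial (Fin m) K))) ^ 2 := by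
  exact strongly_stable_cohenMacaulay_iff_general (ringKrullDim_eq_zero_of_field K) hss
    (isGeneratedInDegree_two_of_eq_span hgen) (fun i ↦ Nat.le_sub_one_of_lt i.2)
    (Finsupp.degree_single _ 1) hx1m
end
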